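/- Let r ≥ 3 and n₂, …, n_r be positive integers such that r is odd, each n_i (2 ≤ i ≤ r) is odd, and the number of edges of the complete multipartite graph K_{1,n₂,…,n_r} is odd. Then the least t for which K_{1,n₂,…,n_r} has a cyclic interval t-coloring equals 1 + (n₂ + ⋯ + n_r). -/

import Mathlib

open SimpleGraph

/-- The set of colors appearing on edges incident to `v` under the edge coloring `c`. -/
def colorsAt {V : Type*} (G : SimpleGraph V) (c : Sym2 V → ℕ) (v : V) : Set ℕ :=
  c '' (G.incidenceSet v)

/-- A set of natural numbers is an interval of consecutive integers. -/
def IsIntervalSet (S : Set ℕ) : Prop := ∃ a b : ℕ, S = Set.Icc a b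

/-- A proper edge coloring of `G` with colors `1, …, t`: every edge gets a color in
`{1, …, t}` and distinct edges sharing a vertex get distinct colors. -/
def IsProperEdgeColoring {V : Type*} (G : SimpleGraph V) (t : ℕ) (c : Sym2 V → ℕ) : Prop :=
  (∀ e ∈ G.edgeSet, c e ∈ Set.Icc 1 t) ∧
  ∀ e₁ ∈ G.edgeSet, ∀ e₂ ∈ G.edgeSet, e₁ ≠ e₂ → (∃ v, v ∈ e₁ ∧ v ∈ e₂) → c e₁ ≠ c e₂

/-- A cyclic interval `t`-coloring of `G`: a proper edge coloring with colors `1, …, t`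
such that at every vertex the set of incident colors, or its complement in `{1, …, t}`,
is an interval of consecutive integers. -/
def IsCyclicIntervalColoring {V : Type*} (G : SimpleGraph V) (t : ℕ) (c : Sym2 V → ℕ) : Prop :=
  IsProperEdgeColoring G t c ∧
  ∀ v : V, IsIntervalSet (colorsAt G c v) ∨ IsIntervalSet (Set.Icc 1 t \ colorsAt G c v)

/-!
The lower bound is a parity argument. If `t` is even, a set `S ⊆ {1, …, t}` of even size which is an
interval, or whose complement is one, has `∑ x ∈ S, (-1) ^ x = 0`. So if all degrees are even, a
cyclic interval `t`-coloring `c` satisfies `∑ e, (-1) ^ c e = 0` by double counting, and the number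
of edges is even. When that number is odd, `t` is therefore odd; but a universal vertex of even
degree `|V| - 1` forces `t ≥ |V| - 1`, hence `t ≥ |V|`.

For the upper bound, list the vertices part by part as `f 0, …, f (N - 1)` and give the edge joining
`f i` and `f j` the color `(i + j) mod N + 1`. The neighbors of a vertex are cyclically consecutive
in the list, so their colors are cyclically consecutive too.
-/

/-- Sets of colors that are consecutive on the circle `1, …, t`, for `S ⊆ {1, …, t}`: the condition
imposed at every vertex by `IsCyclicIntervalColoring`. -/
def IsCyclicInterval (t : ℕ) (S : Set ℕ) : Prop :=
  IsIntervalSet S ∨ IsIntervalSet (Set.Icc 1 t \ S)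

section AlternatingSums

lemma sum_Icc_neg_one_pow_of_even_card {a b : ℕ} (h : Even (Finset.Icc a b).card) :
    ∑ x ∈ Finset.Icc a b, (-1 : ℤ) ^ x = 0 := by
  rw [Nat.card_Icc] at h
  rw [← Finset.Ico_add_one_right_eq_Icc, Finset.sum_Ico_eq_sum_range]
  simp only [pow_add, ← Finset.mul_sum, neg_one_geom_sum, if_pos h, mul_zero]

lemma IsIntervalSet.sum_neg_one_pow_eq_zero {S : Finset ℕ} (hS : IsIntervalSet (S : Set ℕ))
    (hcard : Even S.card) : ∑ x ∈ S, (-1 : ℤ) ^ x = 0 := by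
  obtain ⟨a, b, hab⟩ := hS
  obtain rfl : S = Finset.Icc a b := Finset.coe_injective (by rw [hab, Finset.coe_Icc])
  exact sum_Icc_neg_one_pow_of_even_card hcard

lemma IsCyclicInterval.sum_neg_one_pow_eq_zero {t : ℕ} (ht : Even t) {S : Finset ℕ}
    (hSt : S ⊆ Finset.Icc 1 t) (hS : IsCyclicInterval t S) (hcard : Even S.card) :
    ∑ x ∈ S, (-1 : ℤ) ^ x = 0 := by
  obtain hS | hS := hS
  · exact hS.sum_neg_one_pow_eq_zero hcard
  · have hIcc : Even (Finset.Icc 1 t).card := by simpa using ht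
    have hsdiff : Even (Finset.Icc 1 t \ S).card := by
      rw [Finset.card_sdiff_of_subset hSt]
      exact hIcc.tsub hcard
    have hsum := Finset.sum_sdiff (f := fun x ↦ (-1 : ℤ) ^ x) hSt
    rwa [sum_Icc_neg_one_pow_of_even_card hIcc,
      IsIntervalSet.sum_neg_one_pow_eq_zero (by simpa using hS) hsdiff, zero_add] at hsum

lemma even_card_of_sum_neg_one_pow_eq_zero {α : Type*} {s : Finset α} {c : α → ℕ}
    (h : ∑ x ∈ s, (-1 : ℤ) ^ c x = 0) : Even s.card := by
  have hmod : ((∑ x ∈ s, (-1) ^ c x : ℤ) : ZMod 2) = s.card := by simp [CharTwo.neg_eq]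
  rwa [h, Int.cast_zero, eq_comm, ZMod.natCast_eq_zero_iff_even] at hmod

end AlternatingSums

section LowerBound

variable {V : Type*} {G : SimpleGraph V} {t : ℕ} {c : Sym2 V → ℕ}

lemma sum_sum_incidenceFinset [Fintype V] [DecidableEq V] [DecidableRel G.Adj] {M : Type*}
    [AddCommMonoid M] (w : Sym2 V → M) :
    ∑ v, ∑ e ∈ G.incidenceFinset v, w e = 2 • ∑ e ∈ G.edgeFinset, w e := by
  rw [Finset.sum_comm' (t' := G.edgeFinset) (s' := Sym2.toFinset)
    (by simp [incidenceSet, and_comm]), Finset.smul_sum]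
  refine Finset.sum_congr rfl fun e he ↦ ?_
  rw [Finset.sum_const,
    Sym2.card_toFinset_of_not_isDiag e (G.not_isDiag_of_mem_edgeSet (mem_edgeFinset.1 he))]

lemma IsProperEdgeColoring.injOn_incidenceSet (hc : IsProperEdgeColoring G t c) (v : V) :
    Set.InjOn c (G.incidenceSet v) := fun e₁ he₁ e₂ he₂ heq ↦
  by_contra fun hne ↦ hc.2 e₁ he₁.1 e₂ he₂.1 hne ⟨v, he₁.2, he₂.2⟩ heq

lemma IsProperEdgeColoring.degree_le (hc : IsProperEdgeColoring G t c) (v : V)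
    [Fintype (G.neighborSet v)] : G.degree v ≤ t := by
  classical
  calc G.degree v = (G.incidenceFinset v).card := (G.card_incidenceFinset_eq_degree v).symm
    _ ≤ (Finset.Icc 1 t).card := Finset.card_le_card_of_injOn c
        (fun e he ↦ by simpa using hc.1 e ((G.mem_incidenceFinset v e).1 he).1)
        (by simpa using hc.injOn_incidenceSet v)
    _ = t := by simp

lemma IsCyclicIntervalColoring.sum_incidenceFinset_neg_one_pow [DecidableEq V]
    (hc : IsCyclicIntervalColoring G t c) (ht : Even t) (v : V) [Fintype (G.neighborSet v)]
    (hv : Even (G.degree v)) : ∑ e ∈ G.incidenceFinset v, (-1 : ℤ) ^ c e = 0 := by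
  have hinj : Set.InjOn c (G.incidenceFinset v) := by simpa using hc.1.injOn_incidenceSet v
  rw [← Finset.sum_image (f := fun x ↦ (-1 : ℤ) ^ x) hinj]
  refine IsCyclicInterval.sum_neg_one_pow_eq_zero ht ?_ ?_ ?_
  · refine Finset.image_subset_iff.2 fun e he ↦ ?_
    simpa using hc.1.1 e ((G.mem_incidenceFinset v e).1 he).1
  · simpa [IsCyclicInterval, colorsAt] using hc.2 v
  · rwa [Finset.card_image_of_injOn hinj, card_incidenceFinset_eq_degree]

lemma IsCyclicIntervalColoring.even_card_edgeFinset [Fintype V] [DecidableRel G.Adj]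
    (hc : IsCyclicIntervalColoring G t c) (ht : Even t) (hdeg : ∀ v, Even (G.degree v)) :
    Even G.edgeFinset.card := by
  classical
  refine even_card_of_sum_neg_one_pow_eq_zero (c := c) ?_
  have htwice := sum_sum_incidenceFinset (G := G) fun e ↦ (-1 : ℤ) ^ c e
  rw [Finset.sum_eq_zero fun v _ ↦ hc.sum_incidenceFinset_neg_one_pow ht v (hdeg v)] at htwice
  simpa using htwice.symm

lemma IsCyclicIntervalColoring.card_le [Fintype V] [DecidableRel G.Adj]
    (hc : IsCyclicIntervalColoring G t c) (hdeg : ∀ v, Even (G.degree v))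
    (hE : Odd G.edgeFinset.card) {v : V} (hv : G.IsUniversal v) : Fintype.card V ≤ t := by
  have hle : Fintype.card V - 1 ≤ t := (G.degree_eq_card_sub_one v).2 hv ▸ hc.1.degree_le v
  have hne : Fintype.card V - 1 ≠ t := by
    rintro rfl
    refine Nat.not_even_iff_odd.2 hE (hc.even_card_edgeFinset ?_ hdeg)
    exact (G.degree_eq_card_sub_one v).2 hv ▸ hdeg v
  omega

end LowerBound

section CyclicIntervals

lemma image_mod_add_one_Ico_add_mul (N p q m : ℕ) :
    (· % N + 1) '' Set.Ico (p + N * m) (q + N * m) = (· % N + 1) '' Set.Ico p q := by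
  rw [← Set.image_add_const_Ico, Set.image_image]
  simp only [Nat.add_mul_mod_self_left]

lemma image_mod_add_one_Ico_of_le {N p q : ℕ} (hq : q ≤ N) :
    (· % N + 1) '' Set.Ico p q = Set.Icc (p + 1) q := by
  have hmod : Set.EqOn (· % N + 1) (· + 1) (Set.Ico p q) := fun k hk ↦ by
    simp only [Nat.mod_eq_of_lt (hk.2.trans_le hq)]
  rw [hmod.image_eq, Set.image_add_const_Ico, Set.Ico_add_one_right_eq_Icc]

lemma Icc_sdiff_image_mod_add_one_Ico {N p q : ℕ} (hp : p ≤ N) (hq : N ≤ q) (hqp : q ≤ p + N) :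
    Set.Icc 1 N \ (· % N + 1) '' Set.Ico p q = Set.Icc (q - N + 1) p := by
  have hwrap : (· % N + 1) '' Set.Ico N q = Set.Icc 1 (q - N) :=
    calc (· % N + 1) '' Set.Ico N q
    _ = (· % N + 1) '' Set.Ico (0 + N * 1) (q - N + N * 1) := by
        rw [zero_add, mul_one, Nat.sub_add_cancel hq]
    _ = (· % N + 1) '' Set.Ico 0 (q - N) := image_mod_add_one_Ico_add_mul N 0 (q - N) 1
    _ = Set.Icc 1 (q - N) := image_mod_add_one_Ico_of_le (by omega)
  rw [← Set.Ico_union_Ico_eq_Ico hp hq, Set.image_union, image_mod_add_one_Ico_of_le le_rfl, hwrap]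
  ext x
  simp only [Set.mem_sdiff, Set.mem_union, Set.mem_Icc]
  omega

lemma isCyclicInterval_image_mod_add_one_Ico {N p q : ℕ} (hN : 0 < N) (hpq : p ≤ q)
    (hqp : q ≤ p + N) : IsCyclicInterval N ((· % N + 1) '' Set.Ico p q) := by
  wlog hp : p < N generalizing p q
  · have hle : N * (p / N) ≤ p := Nat.mul_div_le p N
    have hlt : p - N * (p / N) < N := by
      rw [← Nat.mod_eq_sub_mul_div]
      exact Nat.mod_lt p hN
    rw [← Nat.sub_add_cancel hle, ← Nat.sub_add_cancel (hle.trans hpq),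
      image_mod_add_one_Ico_add_mul]
    exact this (Nat.sub_le_sub_right hpq _) (by omega) hlt
  obtain hq | hq := le_total q N
  · exact .inl ⟨p + 1, q, image_mod_add_one_Ico_of_le hq⟩
  · exact .inr ⟨q - N + 1, p, Icc_sdiff_image_mod_add_one_Ico hp.le hq hqp⟩

end CyclicIntervals

section UpperBound

variable {V : Type*} {G : SimpleGraph V} {N : ℕ}

/-- The listing `f` of the vertices makes the non-neighbors of each vertex, itself included,
consecutive. The graphs with such a listing are the complements of indifference graphs; in a
complete multipartite graph, listing the vertices part by part is enough. -/
def HasConsecutiveNonneighbors (G : SimpleGraph V) (f : Fin N ≃ V) : Prop :=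
  ∀ v, {k | ¬ G.Adj v (f k)}.OrdConnected

/-- The coloring of the edge joining the `i`-th and `j`-th vertices of the listing `f` by the
residue of `i + j` modulo `N`, shifted to take values in `{1, …, N}`. -/
def indexSumColoring (f : Fin N ≃ V) : Sym2 V → ℕ :=
  Sym2.lift ⟨fun u v ↦ (f.symm u + f.symm v : ℕ) % N + 1, fun u v ↦ by simp only [Nat.add_comm]⟩

lemma indexSumColoring_mk (f : Fin N ≃ V) (u v : V) :
    indexSumColoring f s(u, v) = (f.symm u + f.symm v : ℕ) % N + 1 := rfl

lemma indexSumColoring_injective_right (f : Fin N ≃ V) (v : V) :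
    Function.Injective fun u ↦ indexSumColoring f s(v, u) := fun a b hab ↦ by
  have hmod : f.symm v + f.symm a ≡ f.symm v + f.symm b [MOD N] := Nat.add_right_cancel hab
  exact f.symm.injective <| Fin.ext <|
    (Nat.ModEq.add_left_cancel' _ hmod).eq_of_lt_of_lt (f.symm a).2 (f.symm b).2

lemma isProperEdgeColoring_indexSumColoring (G : SimpleGraph V) (f : Fin N ≃ V) :
    IsProperEdgeColoring G N (indexSumColoring f) := by
  refine ⟨fun e _ ↦ ?_, ?_⟩
  · induction e with
    | _ u v => exact ⟨Nat.le_add_left _ _, Nat.mod_lt _ (f.symm u).pos⟩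
  · rintro e₁ - e₂ - hne ⟨v, hv₁, hv₂⟩ heq
    obtain ⟨a, rfl⟩ := hv₁
    obtain ⟨b, rfl⟩ := hv₂
    exact hne (congrArg _ (indexSumColoring_injective_right f v heq))

lemma colorsAt_eq_image_neighborSet (G : SimpleGraph V) (c : Sym2 V → ℕ) (v : V) :
    colorsAt G c v = (fun u ↦ c s(v, u)) '' G.neighborSet v := by
  ext x
  constructor
  · rintro ⟨e, ⟨he, u, rfl⟩, rfl⟩
    exact ⟨u, he, rfl⟩
  · rintro ⟨u, hu, rfl⟩
    exact ⟨s(v, u), G.mk'_mem_incidenceSet_left_iff.2 hu, rfl⟩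

/-- Cyclically, the neighbors of `v` start right after the last non-neighbor `b` and end right
before the first non-neighbor `a` one turn later. -/
lemma colorsAt_indexSumColoring {f : Fin N ≃ V} {v : V} {a b : Fin N}
    (hab : {k | ¬ G.Adj v (f k)} = Set.Icc a b) :
    colorsAt G (indexSumColoring f) v =
      (· % N + 1) '' Set.Ico (f.symm v + (b + 1) : ℕ) (f.symm v + (a + N)) := by
  have hadj (j : Fin N) : G.Adj v (f j) ↔ ¬ ((a : ℕ) ≤ j ∧ (j : ℕ) ≤ b) :=
    (not_iff_comm.1 (Set.ext_iff.1 hab j)).symm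
  rw [colorsAt_eq_image_neighborSet]
  ext x
  constructor
  · rintro ⟨u, hu, rfl⟩
    obtain ⟨j, rfl⟩ := f.surjective u
    have hj := (hadj j).1 hu
    simp only [indexSumColoring_mk, Equiv.symm_apply_apply]
    obtain hja | hbj : j < a ∨ b < j := by omega
    · exact ⟨f.symm v + j + N, ⟨by omega, by omega⟩, by simp⟩
    · exact ⟨f.symm v + j, ⟨by omega, by omega⟩, rfl⟩
  · rintro ⟨k, ⟨hbk, hka⟩, rfl⟩
    obtain hlt | hge := Nat.lt_or_ge k (f.symm v + N)
    · refine ⟨f ⟨k - f.symm v, by omega⟩, (hadj _).2 (by simp only; omega), ?_⟩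
      simp only [indexSumColoring_mk, Equiv.symm_apply_apply]
      rw [Nat.add_sub_cancel' (by omega)]
    · refine ⟨f ⟨k - f.symm v - N, by omega⟩, (hadj _).2 (by simp only; omega), ?_⟩
      simp only [indexSumColoring_mk, Equiv.symm_apply_apply]
      rw [← Nat.add_mod_right, show f.symm v + (k - f.symm v - N) + N = k by omega]

lemma HasConsecutiveNonneighbors.isCyclicIntervalColoring {f : Fin N ≃ V}
    (hf : HasConsecutiveNonneighbors G f) : IsCyclicIntervalColoring G N (indexSumColoring f) := by
  refine ⟨isProperEdgeColoring_indexSumColoring G f, fun v ↦ ?_⟩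
  have hmem : f.symm v ∈ {k | ¬ G.Adj v (f k)} := by simp
  have : NeZero N := .of_pos (f.symm v).pos
  have hIcc := (Set.Nonempty.ordConnected_iff_of_bdd' ⟨_, hmem⟩).1 (hf v)
  obtain ⟨hle, hge⟩ := hIcc ▸ hmem
  rw [colorsAt_indexSumColoring hIcc]
  exact isCyclicInterval_image_mod_add_one_Ico (f.symm v).pos (by omega) (by omega)

end UpperBound

theorem stmt_16_general {V : Type*} [Fintype V] {G : SimpleGraph V} [DecidableRel G.Adj]
    {N : ℕ} {f : Fin N ≃ V} (hf : HasConsecutiveNonneighbors G f)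
    (hdeg : ∀ v, Even (G.degree v)) (hE : Odd G.edgeFinset.card) {v : V} (hv : G.IsUniversal v) :
    IsLeast {t : ℕ | ∃ c : Sym2 V → ℕ, IsCyclicIntervalColoring G t c} N := by
  refine ⟨⟨indexSumColoring f, hf.isCyclicIntervalColoring⟩, ?_⟩
  rintro t ⟨c, hc⟩
  simpa [← Fintype.card_congr f] using hc.card_le hdeg hE hv

section CompleteMultipartite

lemma exists_equiv_monotone_comp {α ι : Type*} [Fintype α] [LinearOrder ι] (g : α → ι) :
    ∃ f : Fin (Fintype.card α) ≃ α, Monotone (g ∘ f) := by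
  let e := (Fintype.equivFin α).symm
  exact ⟨(Tuple.sort (g ∘ e)).trans e, Tuple.monotone_sort (g ∘ e)⟩

variable {ι : Type*} {V : ι → Type*}

lemma exists_hasConsecutiveNonneighbors_completeMultipartiteGraph [Fintype (Σ i, V i)] :
    ∃ f : Fin (Fintype.card (Σ i, V i)) ≃ Σ i, V i,
      HasConsecutiveNonneighbors (completeMultipartiteGraph V) f := by
  obtain ⟨_, -⟩ := exists_wellFoundedLT (α := ι)
  obtain ⟨f, hf⟩ := exists_equiv_monotone_comp (Sigma.fst : (Σ i, V i) → ι)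
  refine ⟨f, fun v ↦ ?_⟩
  convert (Set.ordConnected_singleton (a := v.1)).preimage_mono hf using 1
  ext k
  simp [eq_comm]

lemma isUniversal_completeMultipartiteGraph {v : Σ i, V i} [Subsingleton (V v.1)] :
    (completeMultipartiteGraph V).IsUniversal v := by
  rintro ⟨i, x⟩ hne (rfl : v.1 = i)
  exact hne (Sigma.ext rfl (heq_of_eq (Subsingleton.elim _ _)))

variable [Fintype ι] [∀ i, Fintype (V i)]

lemma degree_completeMultipartiteGraph [DecidableEq ι] (v : Σ i, V i)
    [Fintype ((completeMultipartiteGraph V).neighborSet v)] :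
    (completeMultipartiteGraph V).degree v = ∑ i ∈ Finset.univ.erase v.1, Fintype.card (V i) := by
  have hnbr : (completeMultipartiteGraph V).neighborFinset v =
      (Finset.univ.erase v.1).sigma fun _ ↦ Finset.univ := by
    ext u
    simp [eq_comm]
  rw [← card_neighborFinset_eq_degree, hnbr, Finset.card_sigma]
  rfl

lemma even_degree_completeMultipartiteGraph (hι : Odd (Fintype.card ι))
    (hV : ∀ i, Odd (Fintype.card (V i))) (v : Σ i, V i)
    [Fintype ((completeMultipartiteGraph V).neighborSet v)] :
    Even ((completeMultipartiteGraph V).degree v) := by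
  classical
  rw [degree_completeMultipartiteGraph, Finset.even_sum_iff_even_card_odd,
    Finset.filter_true_of_mem fun i _ ↦ hV i, Finset.card_erase_of_mem (Finset.mem_univ _)]
  exact hι.tsub_odd odd_one

theorem isLeast_cyclicIntervalColoring_completeMultipartiteGraph [DecidableEq ι]
    [DecidableRel (completeMultipartiteGraph V).Adj] (hι : Odd (Fintype.card ι)) {i₀ : ι}
    (h₀ : Fintype.card (V i₀) = 1) (hV : ∀ i ≠ i₀, Odd (Fintype.card (V i)))
    (hE : Odd (completeMultipartiteGraph V).edgeFinset.card) :
    IsLeast {t : ℕ | ∃ c : Sym2 (Σ i, V i) → ℕ,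
        IsCyclicIntervalColoring (completeMultipartiteGraph V) t c}
      (1 + ∑ i ∈ Finset.univ.erase i₀, Fintype.card (V i)) := by
  have hodd : ∀ i, Odd (Fintype.card (V i)) := fun i ↦ by
    obtain rfl | hi := eq_or_ne i i₀
    · exact h₀ ▸ odd_one
    · exact hV i hi
  rw [← h₀, Finset.add_sum_erase _ (fun i ↦ Fintype.card (V i)) (Finset.mem_univ i₀),
    ← Fintype.card_sigma]
  obtain ⟨f, hf⟩ := exists_hasConsecutiveNonneighbors_completeMultipartiteGraph (V := V)
  obtain ⟨x, hx⟩ := Fintype.card_eq_one_iff.1 h₀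
  have : Subsingleton (V i₀) := ⟨fun y z ↦ (hx y).trans (hx z).symm⟩
  exact stmt_16_general hf (fun v ↦ even_degree_completeMultipartiteGraph hι hodd v) hE
    (isUniversal_completeMultipartiteGraph (v := ⟨i₀, x⟩))

end CompleteMultipartite

/-- if `r ≥ 3` is odd, `n₂, …, n_r` are odd positive integers, and the
complete multipartite graph `K_{1,n₂,…,n_r}` has an odd number of edges, then the least
`t` for which it has a cyclic interval `t`-coloring equals `1 + (n₂ + ⋯ + n_r)`. -/
theorem stmt_16 (r : ℕ) (hr : 3 ≤ r) (hrodd : Odd r) (n : Fin r → ℕ)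
    (h1 : n ⟨0, by omega⟩ = 1) (hpos : ∀ i, 0 < n i)
    (hodd : ∀ i : Fin r, i.val ≠ 0 → Odd (n i))
    (hE : Odd (SimpleGraph.completeMultipartiteGraph
        (fun i : Fin r => Fin (n i))).edgeFinset.card) :
    IsLeast {t : ℕ | ∃ c : Sym2 (Σ i : Fin r, Fin (n i)) → ℕ,
        IsCyclicIntervalColoring
          (SimpleGraph.completeMultipartiteGraph (fun i : Fin r => Fin (n i))) t c}
      (1 + ∑ i ∈ Finset.univ.filter (fun i : Fin r => i.val ≠ 0), n i) := by
  simpa [← Finset.filter_ne', Fin.ext_iff] using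
    isLeast_cyclicIntervalColoring_completeMultipartiteGraph (by simpa using hrodd)
      (i₀ := ⟨0, _⟩) (by simpa using h1) (by simpa [Fin.ext_iff] using hodd) hE
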